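/- Let Γ₁ and Γ₂ be digraphons on a probability space (Ω,μ) with Γ₁(x,y) ≤ Γ₂(x,y) for almost every (x,y) ∈ Ω². Then ρ(Γ₁) ≤ ρ(Γ₂). -/

import Mathlib

open MeasureTheory Filter Set Topology
open scoped ENNReal Real

namespace Digraphon

variable {Ω : Type*} [MeasurableSpace Ω]

/-- `kpowAux μ Γ n` is the `(n+1)`-st kernel power of `Γ`. -/
noncomputable def kpowAux (μ : Measure Ω) (Γ : Ω → Ω → ℝ) : ℕ → Ω → Ω → ℝ
  | 0 => Γ
  | n + 1 => fun x y => ∫ z, Γ x z * kpowAux μ Γ n z y ∂μ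

/-- `dpow μ Γ k` is the `k`-th kernel power of `Γ` (intended for `k ≥ 1`). -/
noncomputable def dpow (μ : Measure Ω) (Γ : Ω → Ω → ℝ) (k : ℕ) : Ω → Ω → ℝ :=
  kpowAux μ Γ (k - 1)

noncomputable def kpowAuxC (μ : Measure Ω) (Γ : Ω → Ω → ℂ) : ℕ → Ω → Ω → ℂ
  | 0 => Γ
  | n + 1 => fun x y => ∫ z, Γ x z * kpowAuxC μ Γ n z y ∂μ

noncomputable def dpowC (μ : Measure Ω) (Γ : Ω → Ω → ℂ) (k : ℕ) : Ω → Ω → ℂ :=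
  kpowAuxC μ Γ (k - 1)

/-- The set of points reachable from `x`. -/
def ReachOut (μ : Measure Ω) (Γ : Ω → Ω → ℝ) (x : Ω) : Set Ω :=
  {z | ∃ k : ℕ, 1 ≤ k ∧ 0 < dpow μ Γ k x z}

/-- The reachability sequence from `x` to `y`. -/
def reachSeq (μ : Measure Ω) (Γ : Ω → Ω → ℝ) (x y : Ω) : Set ℕ :=
  {k : ℕ | 1 ≤ k ∧ 0 < dpow μ Γ k x y}

/-- A digraphon: a measurable kernel with values in `[0,1]`. -/
def IsDigraphon (Γ : Ω → Ω → ℝ) : Prop :=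
  Measurable (Function.uncurry Γ) ∧ ∀ x y, Γ x y ∈ Set.Icc (0 : ℝ) 1

/-- `X` is strongly connected in `Γ`. -/
def StronglyConnectedIn (μ : Measure Ω) (Γ : Ω → Ω → ℝ) (X : Set Ω) : Prop :=
  MeasurableSet X ∧ 0 < μ X ∧
    ∀ A B : Set Ω, MeasurableSet A → MeasurableSet B → A ∪ B = X → Disjoint A B →
      0 < μ A → 0 < μ B → 0 < ∫ x in A, ∫ y in B, Γ x y ∂μ ∂μ

/-- `X` is a strong component in `Γ`. -/
def StrongComponent (μ : Measure Ω) (Γ : Ω → Ω → ℝ) (X : Set Ω) : Prop :=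
  StronglyConnectedIn μ Γ X ∧
    ∀ Y : Set Ω, MeasurableSet Y → 0 < μ (X ∩ Y) → 0 < μ (Y \ X) →
      ¬ StronglyConnectedIn μ Γ Y

/-- `X` is fragmented in `Γ`. -/
def Fragmented (μ : Measure Ω) (Γ : Ω → Ω → ℝ) (X : Set Ω) : Prop :=
  ∀ Y : Set Ω, Y ⊆ X → MeasurableSet Y → ¬ StronglyConnectedIn μ Γ Y

/-- `τ` is an eigenvalue of the integral kernel operator of `Γ` on `L²(Ω;ℂ)`. -/
def IsEigenvalue (μ : Measure Ω) (Γ : Ω → Ω → ℝ) (τ : ℂ) : Prop :=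
  ∃ f : Ω → ℂ, MemLp f 2 μ ∧ ¬(f =ᵐ[μ] 0) ∧
    ∀ᵐ x ∂μ, ∫ y, f y * (Γ y x : ℂ) ∂μ = τ * f x

/-- The spectral radius of `Γ` (`0` if there are no eigenvalues). -/
noncomputable def specRad (μ : Measure Ω) (Γ : Ω → Ω → ℝ) : ℝ :=
  sSup (insert 0 {r : ℝ | ∃ τ : ℂ, IsEigenvalue μ Γ τ ∧ ‖τ‖ = r})

/-- The number of eigenvalues of modulus `specRad μ Γ`. -/
noncomputable def periphMult (μ : Measure Ω) (Γ : Ω → Ω → ℝ) : ℕ :=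
  {τ : ℂ | IsEigenvalue μ Γ τ ∧ ‖τ‖ = specRad μ Γ}.ncard

/-- `P : ZMod d → Set Ω` witnesses graphical `d`-periodicity of `Γ`. -/
def IsPeriodicityWitness (μ : Measure Ω) (Γ : Ω → Ω → ℝ) {d : ℕ} (P : ZMod d → Set Ω) : Prop :=
  (∀ j, MeasurableSet (P j)) ∧ Pairwise (Function.onFun Disjoint P) ∧ (⋃ j, P j) = Set.univ ∧
    ∀ j : ZMod d, (μ.prod μ) {p : Ω × Ω | p.1 ∈ P j ∧ p.2 ∉ P (j + 1) ∧ Γ p.1 p.2 ≠ 0} = 0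

/-- `Γ` is graphically `d`-periodic. -/
def GraphPeriodic (μ : Measure Ω) (Γ : Ω → Ω → ℝ) (d : ℕ) : Prop :=
  ∃ P : ZMod d → Set Ω, IsPeriodicityWitness μ Γ P

/-- `Γ` is aperiodic. -/
def Aperiodic (μ : Measure Ω) (Γ : Ω → Ω → ℝ) : Prop :=
  ∀ d : ℕ, 1 ≤ d → GraphPeriodic μ Γ d → d = 1

/-- `S ⊆ ℕ` is eventually `D`-periodic with shift `s`. -/
def EvPeriodic (D : ℕ) (s : ℤ) (S : Set ℕ) : Prop :=
  (∀ n ∈ S, (D : ℤ) ∣ ((n : ℤ) - s)) ∧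
    ∃ k : ℕ, ∀ n : ℕ, k ≤ n → (((D : ℤ) ∣ ((n : ℤ) - s)) ↔ n ∈ S)

/-- The homomorphism density `t(C_k, Γ)` of the directed `k`-cycle. -/
noncomputable def cycleDensity (μ : Measure Ω) (Γ : Ω → Ω → ℝ) (k : ℕ) : ℝ :=
  ∫ x : Fin k → Ω, ∏ i : Fin k, Γ (x i) (x (finRotate k i)) ∂(Measure.pi fun _ => μ)

/-- `Γ⟦A⟧` : the kernel equal to `Γ` on `A × A` and `0` elsewhere. -/
noncomputable def kerRestrict (Γ : Ω → Ω → ℝ) (A : Set Ω) : Ω → Ω → ℝ :=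
  fun x y => (A ×ˢ A).indicator (Function.uncurry Γ) (x, y)

/-- Equality of sets modulo a `μ`-nullset. -/
def AEEqSet (μ : Measure Ω) (A B : Set Ω) : Prop := μ ((A \ B) ∪ (B \ A)) = 0

/-- The normalized restriction of `μ` to `A`, as a measure on `↥A`. -/
noncomputable def subMeasure (μ : Measure Ω) (A : Set Ω) : Measure ↥A :=
  (μ A)⁻¹ • Measure.comap Subtype.val μ

/-- The restriction of a kernel to `A × A`, as a kernel on `↥A`. -/
def subKernel (Γ : Ω → Ω → ℝ) (A : Set Ω) : ↥A → ↥A → ℝ :=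
  fun a b => Γ ↑a ↑b

/-- A finite oriented graph: no pair of antiparallel edges (in particular no loops). -/
structure OrientedGraph where
  n : ℕ
  E : Finset (Fin n × Fin n)
  no_anti : ∀ e ∈ E, (e.2, e.1) ∉ E

/-- The homomorphism density `t(D, Γ)` of an oriented graph `D`. -/
noncomputable def homDensity (μ : Measure Ω) (Γ : Ω → Ω → ℝ) (D : OrientedGraph) : ℝ :=
  ∫ x : Fin D.n → Ω, ∏ e ∈ D.E, Γ (x e.1) (x e.2) ∂(Measure.pi fun _ => μ)

/-- The cut norm distance of two kernels. -/
noncomputable def cutNormDist (μ : Measure Ω) (U W : Ω → Ω → ℝ) : ℝ :=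
  sSup {r : ℝ | ∃ S T : Set Ω, MeasurableSet S ∧ MeasurableSet T ∧
    r = |∫ x in S, ∫ y in T, (U x y - W x y) ∂μ ∂μ|}

/-- The cut distance of two kernels. -/
noncomputable def cutDist (μ : Measure Ω) (U W : Ω → Ω → ℝ) : ℝ :=
  sInf {r : ℝ | ∃ e : Ω ≃ᵐ Ω, MeasurePreserving e μ μ ∧
    r = cutNormDist μ U (fun x y => W (e x) (e y))}


section aux

variable {Ω : Type*} [MeasurableSpace Ω]

/-- `T` is the integral operator on `L²` with kernel `K`. -/
def IsKerOp (μ : Measure Ω) (K : Ω × Ω → ℂ) (T : Lp ℂ 2 μ →L[ℂ] Lp ℂ 2 μ) : Prop :=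
  ∀ f : Lp ℂ 2 μ, ∀ᵐ x ∂μ, T f x = ∫ y, f y * K (x, y) ∂μ

lemma sq_eLpNorm_two {α : Type*} [MeasurableSpace α] (ν : Measure α) (f : α → ℂ) :
    (eLpNorm f 2 ν) ^ 2 = ∫⁻ x, ‖f x‖ₑ ^ 2 ∂ν := by
  have h := eLpNorm_nnreal_pow_eq_lintegral (f := f) (μ := ν) (p := 2) (by norm_num)
  simpa using h

lemma section_sq_finite (μ : Measure Ω) [IsProbabilityMeasure μ] {K : Ω × Ω → ℂ}
    (hK : MemLp K 2 (μ.prod μ)) : ∀ᵐ x ∂μ, MemLp (fun y => K (x, y)) 2 μ := by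
  have hm : AEMeasurable (fun p => ‖K p‖ₑ ^ 2) (μ.prod μ) := hK.1.enorm.pow_const _
  have h1 : ∫⁻ x, ∫⁻ y, ‖K (x, y)‖ₑ ^ 2 ∂μ ∂μ ≠ ∞ := by
    rw [← lintegral_prod _ hm, ← sq_eLpNorm_two]
    exact ENNReal.pow_ne_top hK.2.ne
  have h2 := ae_lt_top' hm.lintegral_prod_right' h1
  filter_upwards [h2, hK.1.prodMk_left] with x hx hx2
  refine ⟨hx2, ?_⟩
  rw [← sq_eLpNorm_two] at hx
  by_contra hc
  simp only [not_lt, top_le_iff] at hc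
  rw [hc] at hx
  simp at hx

lemma kop_integrable (μ : Measure Ω) [IsProbabilityMeasure μ] {K : Ω × Ω → ℂ}
    (hK : MemLp K 2 (μ.prod μ)) {f : Ω → ℂ} (hf : MemLp f 2 μ) :
    ∀ᵐ x ∂μ, Integrable (fun y => f y * K (x, y)) μ := by
  filter_upwards [section_sq_finite μ hK] with x hx
  exact hf.integrable_mul hx

lemma kop_aesm (μ : Measure Ω) [IsProbabilityMeasure μ] {K : Ω × Ω → ℂ}
    (hK : MemLp K 2 (μ.prod μ)) {f : Ω → ℂ} (hf : MemLp f 2 μ) :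
    AEStronglyMeasurable (fun x => ∫ y, f y * K (x, y) ∂μ) μ := by
  have : AEStronglyMeasurable (fun p : Ω × Ω => f p.2 * K p) (μ.prod μ) :=
    (hf.1.comp_snd).mul hK.1
  exact this.integral_prod_right'

lemma kop_bound (μ : Measure Ω) [IsProbabilityMeasure μ] {K : Ω × Ω → ℂ}
    (hK : MemLp K 2 (μ.prod μ)) {f : Ω → ℂ} (hf : MemLp f 2 μ) :
    eLpNorm (fun x => ∫ y, f y * K (x, y) ∂μ) 2 μ ≤ eLpNorm K 2 (μ.prod μ) * eLpNorm f 2 μ := by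
  have hm : AEMeasurable (fun p => ‖K p‖ₑ ^ 2) (μ.prod μ) := hK.1.enorm.pow_const _
  rw [← ENNReal.pow_le_pow_left_iff (n := 2) (by norm_num), sq_eLpNorm_two, mul_pow,
    sq_eLpNorm_two (μ.prod μ) K, lintegral_prod _ hm, ← lintegral_mul_const'' _ hm.lintegral_prod_right']
  refine lintegral_mono_ae ?_
  filter_upwards [section_sq_finite μ hK] with x hx
  rw [← sq_eLpNorm_two, ← mul_pow]
  gcongr
  calc ‖∫ y, f y * K (x, y) ∂μ‖ₑ ≤ ∫⁻ y, ‖f y * K (x, y)‖ₑ ∂μ := enorm_integral_le_lintegral_enorm _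
    _ = eLpNorm (f • fun y => K (x, y)) 1 μ := by
        rw [eLpNorm_one_eq_lintegral_enorm]; rfl
    _ ≤ eLpNorm f 2 μ * eLpNorm (fun y => K (x, y)) 2 μ :=
        eLpNorm_smul_le_mul_eLpNorm hx.1 hf.1
    _ = _ := mul_comm _ _

lemma exists_kerOp (μ : Measure Ω) [IsProbabilityMeasure μ] {K : Ω × Ω → ℂ}
    (hK : MemLp K 2 (μ.prod μ)) :
    ∃ T : Lp ℂ 2 μ →L[ℂ] Lp ℂ 2 μ, IsKerOp μ K T ∧ ‖T‖ ≤ (eLpNorm K 2 (μ.prod μ)).toReal := by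
  have hmem : ∀ f : Lp ℂ 2 μ, MemLp (fun x => ∫ y, f y * K (x, y) ∂μ) 2 μ := fun f =>
    ⟨kop_aesm μ hK (Lp.memLp f), (kop_bound μ hK (Lp.memLp f)).trans_lt
      (ENNReal.mul_lt_top hK.2 (Lp.memLp f).2)⟩
  let L : Lp ℂ 2 μ →ₗ[ℂ] Lp ℂ 2 μ :=
    { toFun := fun f => (hmem f).toLp _
      map_add' := by
        intro f g
        rw [← MemLp.toLp_add]
        refine MemLp.toLp_congr _ _ ?_
        filter_upwards [kop_integrable μ hK (Lp.memLp f), kop_integrable μ hK (Lp.memLp g)]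
          with x hf hg
        simp only [Pi.add_apply]
        rw [← integral_add hf hg]
        refine integral_congr_ae ?_
        filter_upwards [Lp.coeFn_add f g] with y hy
        rw [hy]; simp [add_mul]
      map_smul' := by
        intro c f
        rw [RingHom.id_apply, ← MemLp.toLp_const_smul]
        refine MemLp.toLp_congr _ _ (.of_forall fun x => ?_)
        simp only [Pi.smul_apply, smul_eq_mul]
        rw [← integral_const_mul]
        refine integral_congr_ae ?_
        filter_upwards [Lp.coeFn_smul c f] with y hy
        rw [hy]; simp [mul_assoc] }
  refine ⟨L.mkContinuous (eLpNorm K 2 (μ.prod μ)).toReal ?_, ?_, ?_⟩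
  · intro f
    change ‖(hmem f).toLp _‖ ≤ _
    rw [Lp.norm_toLp, Lp.norm_def, ← ENNReal.toReal_mul]
    exact ENNReal.toReal_mono (ENNReal.mul_ne_top hK.2.ne (Lp.memLp f).2.ne)
      (kop_bound μ hK (Lp.memLp f))
  · intro f
    exact (hmem f).coeFn_toLp
  · exact LinearMap.mkContinuous_norm_le _ ENNReal.toReal_nonneg _

lemma IsKerOp.unique {μ : Measure Ω} {K : Ω × Ω → ℂ} {T S : Lp ℂ 2 μ →L[ℂ] Lp ℂ 2 μ}
    (hT : IsKerOp μ K T) (hS : IsKerOp μ K S) : T = S := by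
  ext1 f
  refine Lp.ext ?_
  filter_upwards [hT f, hS f] with x h1 h2
  rw [h1, h2]

lemma IsKerOp.add {μ : Measure Ω} [IsProbabilityMeasure μ] {K K' : Ω × Ω → ℂ}
    {T S : Lp ℂ 2 μ →L[ℂ] Lp ℂ 2 μ}
    (hK : MemLp K 2 (μ.prod μ)) (hK' : MemLp K' 2 (μ.prod μ))
    (hT : IsKerOp μ K T) (hS : IsKerOp μ K' S) : IsKerOp μ (K + K') (T + S) := by
  intro f
  filter_upwards [hT f, hS f, Lp.coeFn_add (T f) (S f), kop_integrable μ hK (Lp.memLp f),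
    kop_integrable μ hK' (Lp.memLp f)] with x h1 h2 h3 h4 h5
  rw [add_apply, h3, Pi.add_apply, h1, h2, ← integral_add h4 h5]
  simp [mul_add]

lemma IsKerOp.smul {μ : Measure Ω} {K : Ω × Ω → ℂ}
    {T : Lp ℂ 2 μ →L[ℂ] Lp ℂ 2 μ} (c : ℂ)
    (hT : IsKerOp μ K T) : IsKerOp μ (c • K) (c • T) := by
  intro f
  filter_upwards [hT f, Lp.coeFn_smul c (T f)] with x h1 h3
  rw [smul_apply, h3, Pi.smul_apply, h1, smul_eq_mul, ← integral_const_mul]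
  simp [mul_left_comm]

lemma IsKerOp.congr {μ : Measure Ω} [IsProbabilityMeasure μ] {K K' : Ω × Ω → ℂ}
    {T : Lp ℂ 2 μ →L[ℂ] Lp ℂ 2 μ} (h : K =ᵐ[μ.prod μ] K')
    (hT : IsKerOp μ K T) : IsKerOp μ K' T := by
  intro f
  filter_upwards [hT f, Measure.ae_ae_of_ae_prod h] with x h1 h3
  rw [h1]
  refine integral_congr_ae ?_
  filter_upwards [h3] with y hy
  rw [hy]

/-- The kernel `K` induces a compact operator. -/
def KC (μ : Measure Ω) (K : Ω × Ω → ℂ) : Prop :=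
  ∃ T : Lp ℂ 2 μ →L[ℂ] Lp ℂ 2 μ, IsKerOp μ K T ∧ IsCompactOperator T

lemma KC.add {μ : Measure Ω} [IsProbabilityMeasure μ] {K K' : Ω × Ω → ℂ}
    (hK : MemLp K 2 (μ.prod μ)) (hK' : MemLp K' 2 (μ.prod μ))
    (h : KC μ K) (h' : KC μ K') : KC μ (K + K') := by
  obtain ⟨T, h1, h2⟩ := h
  obtain ⟨S, h3, h4⟩ := h'
  exact ⟨T + S, h1.add hK hK' h3, h2.add h4⟩

lemma KC.smul {μ : Measure Ω} {K : Ω × Ω → ℂ} (c : ℂ)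
    (h : KC μ K) : KC μ (c • K) := by
  obtain ⟨T, h1, h2⟩ := h
  exact ⟨c • T, h1.smul c, h2.smul c⟩

lemma KC.of_approx {μ : Measure Ω} [IsProbabilityMeasure μ] {K : Ω × Ω → ℂ}
    (hK : MemLp K 2 (μ.prod μ))
    (h : ∀ ε : ℝ≥0∞, 0 < ε → ∃ K', MemLp K' 2 (μ.prod μ) ∧ KC μ K' ∧
      eLpNorm (K - K') 2 (μ.prod μ) < ε) : KC μ K := by
  obtain ⟨T, hT, -⟩ := exists_kerOp μ hK
  refine ⟨T, hT, ?_⟩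
  have hcl := isClosed_setOfPred_isCompactOperator (σ₁₂ := RingHom.id ℂ) (M₁ := Lp ℂ 2 μ)
    (M₂ := Lp ℂ 2 μ)
  have : T ∈ closure {f : Lp ℂ 2 μ →L[ℂ] Lp ℂ 2 μ | IsCompactOperator f} := by
    rw [Metric.mem_closure_iff]
    intro ε hε
    obtain ⟨K', hK', ⟨S, hS, hSc⟩, hlt⟩ := h (ENNReal.ofReal ε) (by simpa using hε)
    refine ⟨S, hSc, ?_⟩
    obtain ⟨R, hR, hRn⟩ := exists_kerOp μ (hK.sub hK')
    have hRT : R + S = T := by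
      refine IsKerOp.unique (hR.add (hK.sub hK') hK' hS) ?_
      simpa using hT
    rw [dist_eq_norm, ← hRT, add_sub_cancel_right]
    refine hRn.trans_lt ?_
    rw [ENNReal.lt_ofReal_iff_toReal_lt hlt.ne_top] at hlt
    exact hlt
  rwa [hcl.closure_eq] at this

lemma memLp_ind (μ : Measure Ω) [IsProbabilityMeasure μ] {s : Set (Ω × Ω)}
    (hs : MeasurableSet s) : MemLp (s.indicator (fun _ => (1 : ℂ))) 2 (μ.prod μ) :=
  memLp_indicator_const 2 hs 1 (Or.inr (measure_ne_top _ _))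

lemma KC.rect (μ : Measure Ω) [IsProbabilityMeasure μ] {A B : Set Ω} (hA : MeasurableSet A)
    (hB : MeasurableSet B) : KC μ ((A ×ˢ B).indicator (fun _ => (1 : ℂ))) := by
  let a : Lp ℂ 2 μ := indicatorConstLp 2 hA (measure_ne_top μ A) (1 : ℂ)
  let b : Lp ℂ 2 μ := indicatorConstLp 2 hB (measure_ne_top μ B) (1 : ℂ)
  refine ⟨(ContinuousLinearMap.toSpanSingleton ℂ a).comp (innerSL ℂ b), ?_, ?_⟩
  · intro f
    have hab : inner ℂ b f = ∫ y in B, f y ∂μ := L2.inner_indicatorConstLp_one hB _ f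
    have e : ((ContinuousLinearMap.toSpanSingleton ℂ a).comp (innerSL ℂ b)) f
        = (∫ y in B, f y ∂μ) • a := by
      simp [← hab]
    rw [e]
    filter_upwards [Lp.coeFn_smul (∫ y in B, f y ∂μ) a,
      (indicatorConstLp_coeFn : (a : Ω → ℂ) =ᵐ[μ] _)] with x h1 h2
    rw [h1, Pi.smul_apply, h2, ← integral_indicator hB]
    by_cases hx : x ∈ A
    · simp only [hx, indicator_of_mem, smul_eq_mul, mul_one]
      congr 1; ext y
      by_cases hy : y ∈ B <;> simp [hx, hy]
    · simp [hx]
  · exact (isCompactOperator_of_locallyCompactSpace_rng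
      (ContinuousLinearMap.toSpanSingleton ℂ a)).comp_clm (innerSL ℂ b)

lemma KC.ind (μ : Measure Ω) [IsProbabilityMeasure μ] {s : Set (Ω × Ω)}
    (hs : MeasurableSet s) : KC μ (s.indicator (fun _ => (1 : ℂ))) := by
  induction s, hs using MeasurableSpace.induction_on_inter generateFrom_prod.symm isPiSystem_prod with
  | empty => simpa using KC.rect μ (A := ∅) (B := ∅) .empty .empty
  | basic t ht =>
    obtain ⟨A, hA, B, hB, rfl⟩ := ht
    exact KC.rect μ hA hB
  | compl t ht ih =>
    have h1 := KC.rect μ (A := univ) (B := univ) .univ .univ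
    have h2 := KC.add (memLp_ind μ (MeasurableSet.univ.prod .univ)) ((memLp_ind μ ht).const_smul (-1)) h1 (ih.smul (-1))
    convert h2 using 1
    ext p
    by_cases hp : p ∈ t <;> simp [hp]
  | iUnion f hd hfm ih =>
    have hfin : ∀ n, KC μ ((⋃ i ∈ Finset.range n, f i).indicator (fun _ => (1 : ℂ))) := by
      intro n
      induction n with
      | zero => simpa using KC.rect μ (A := ∅) (B := ∅) .empty .empty
      | succ n ihn =>
        have h2 := KC.add (memLp_ind μ (Finset.measurableSet_biUnion _ fun i _ => hfm i))
          (memLp_ind μ (hfm n)) ihn (ih n)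
        convert h2 using 1
        refine Eq.trans ?_ (indicator_union_of_disjoint ?_ _)
        · congr 1
          rw [Finset.range_add_one, Finset.set_biUnion_insert, union_comm]
        · rw [Set.disjoint_iUnion₂_left]
          intro i hi
          exact hd (by simp at hi; omega)
    have hm : ∀ n, MeasurableSet (⋃ i ∈ Finset.range n, f i) := fun n =>
      Finset.measurableSet_biUnion _ fun i _ => hfm i
    refine KC.of_approx (memLp_ind μ (.iUnion hfm)) fun ε hε => ?_
    have hsub : ∀ n, (⋃ i ∈ Finset.range n, f i) ⊆ ⋃ i, f i := fun n =>
      iUnion₂_subset fun i _ => subset_iUnion f i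
    have hlim : Tendsto (fun n => (μ.prod μ) ((⋃ i, f i) \ ⋃ i ∈ Finset.range n, f i)) atTop
        (𝓝 0) := by
      have h0 : (⋂ n, ((⋃ i, f i) \ ⋃ i ∈ Finset.range n, f i)) = ∅ := by
        ext p
        simp only [mem_iInter, Set.mem_sdiff, mem_iUnion, mem_empty_iff_false, iff_false]
        intro h
        obtain ⟨i, hi⟩ := (h 0).1
        exact (h (i + 1)).2 ⟨i, by simp, hi⟩
      have := tendsto_measure_iInter_atTop (μ := μ.prod μ)
        (s := fun n => ((⋃ i, f i) \ ⋃ i ∈ Finset.range n, f i))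
        (fun n => ((MeasurableSet.iUnion hfm).diff (hm n)).nullMeasurableSet)
        (fun m n hmn => sdiff_subset_sdiff_right (biUnion_subset_biUnion_left
          (by intro i hi; simp at hi ⊢; omega))) ⟨0, measure_ne_top _ _⟩
      rwa [h0, measure_empty] at this
    have hlim2 : Tendsto (fun n => ((μ.prod μ) ((⋃ i, f i) \ ⋃ i ∈ Finset.range n, f i)) ^ (1 / 2 : ℝ))
        atTop (𝓝 0) := by
      have := hlim.ennrpow_const (1 / 2 : ℝ)
      rwa [ENNReal.zero_rpow_of_pos (by norm_num)] at this
    obtain ⟨n, hn⟩ := (hlim2.eventually_lt_const hε).exists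
    refine ⟨_, memLp_ind μ (hm n), hfin n, ?_⟩
    rw [← indicator_sdiff (hsub n), eLpNorm_indicator_const ((MeasurableSet.iUnion hfm).diff (hm n))
      (by norm_num) (by norm_num)]
    simpa using hn

lemma KC.of_memLp (μ : Measure Ω) [IsProbabilityMeasure μ] {K : Ω × Ω → ℂ}
    (hK : MemLp K 2 (μ.prod μ)) : KC μ K := by
  have : Fact ((1 : ℝ≥0∞) ≤ 2) := ⟨by norm_num⟩
  refine MemLp.induction (p := 2) (by norm_num) (fun K => KC μ K) ?_ ?_ ?_ ?_ hK
  · intro c s hs _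
    convert (KC.ind μ hs).smul c using 1
    ext p
    by_cases hp : p ∈ s <;> simp [hp]
  · intro f g _ hf hg h1 h2
    exact h1.add hf hg h2
  · refine isClosed_of_closure_subset fun K hKc => ?_
    refine KC.of_approx (Lp.memLp K) fun ε hε => ?_
    rw [EMetric.mem_closure_iff] at hKc
    obtain ⟨K', h1, h2⟩ := hKc ε hε
    refine ⟨K', Lp.memLp K', h1, ?_⟩
    rwa [Lp.edist_def] at h2
  · rintro f g hfg _ ⟨T, h1, h2⟩
    exact ⟨T, h1.congr hfg, h2⟩

lemma pow_le_norm_pow {μ : Measure Ω} [IsProbabilityMeasure μ]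
    {Γ₁ Γ₂ : Ω → Ω → ℝ} (h₁ : IsDigraphon Γ₁) (h₂ : IsDigraphon Γ₂)
    (hle : ∀ᵐ p : Ω × Ω ∂(μ.prod μ), Γ₁ p.1 p.2 ≤ Γ₂ p.1 p.2)
    {T : Lp ℂ 2 μ →L[ℂ] Lp ℂ 2 μ} (hT : IsKerOp μ (fun p => (Γ₂ p.2 p.1 : ℂ)) T)
    {τ : ℂ} (hτ : IsEigenvalue μ Γ₁ τ) (n : ℕ) : ‖τ‖ ^ n ≤ ‖T ^ n‖ := by
  obtain ⟨f, hf, hf0, hfe⟩ := hτ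
  have hmulint : ∀ {Γ : Ω → Ω → ℝ}, IsDigraphon Γ → ∀ {u : Ω → ℝ}, Integrable u μ → ∀ x,
      Integrable (fun y => u y * Γ y x) μ := by
    intro Γ hΓ u hu x
    refine hu.mul_bdd (c := 1) ?_ (.of_forall fun y => ?_)
    · exact (hΓ.1.comp (measurable_id.prodMk measurable_const)).aestronglyMeasurable
    · rw [Real.norm_eq_abs, abs_of_nonneg (hΓ.2 y x).1]
      exact (hΓ.2 y x).2
  have hle' : ∀ᵐ x ∂μ, ∀ᵐ y ∂μ, Γ₁ y x ≤ Γ₂ y x := by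
    have h : ∀ᵐ p : Ω × Ω ∂(μ.prod μ), Γ₁ p.2 p.1 ≤ Γ₂ p.2 p.1 :=
      (Measure.measurePreserving_swap (μ := μ) (ν := μ)).quasiMeasurePreserving.ae hle
    exact Measure.ae_ae_of_ae_prod h
  have hg : MemLp (fun x => ((‖f x‖ : ℝ) : ℂ)) 2 μ := hf.norm.ofReal
  have hfi : Integrable (fun x => ‖f x‖) μ := hf.norm.integrable (by norm_num)
  have key : ∀ n : ℕ, ∀ᵐ x ∂μ, ‖τ‖ ^ n * ‖f x‖ ≤ (((T ^ n) (hg.toLp _) : Lp ℂ 2 μ) x).re ∧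
      (((T ^ n) (hg.toLp _) : Lp ℂ 2 μ) x).im = 0 := by
    intro n
    induction n with
    | zero =>
      filter_upwards [hg.coeFn_toLp] with x hx
      simp [hx]
    | succ n ih =>
      rw [pow_succ' T]
      set h := (T ^ n) (hg.toLp _) with hh
      have hhi : Integrable (fun y => (h y).re) μ := ((Lp.memLp h).integrable (by norm_num)).re
      filter_upwards [hT h, hfe, hle'] with x hx hfx hlx
      have e : (T * T ^ n) (hg.toLp _) = T h := rfl
      have e2 : T h x = ((∫ y, (h y).re * Γ₂ y x ∂μ : ℝ) : ℂ) := by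
        rw [hx, ← integral_complex_ofReal]
        refine integral_congr_ae ?_
        filter_upwards [ih] with y hy
        have : h y = ((h y).re : ℂ) := Complex.ext (by simp) (by simp [hy.2])
        rw [Complex.ofReal_mul, ← this]
      rw [e, e2]
      refine ⟨?_, Complex.ofReal_im _⟩
      rw [Complex.ofReal_re, pow_succ, mul_assoc, ← norm_mul, ← hfx]
      calc ‖τ‖ ^ n * ‖∫ y, f y * (Γ₁ y x : ℂ) ∂μ‖
          ≤ ‖τ‖ ^ n * ∫ y, ‖f y * (Γ₁ y x : ℂ)‖ ∂μ := by
            gcongr; exact norm_integral_le_integral_norm _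
        _ = ∫ y, (‖τ‖ ^ n * ‖f y‖) * Γ₁ y x ∂μ := by
            rw [← integral_const_mul]
            congr 1; ext y
            rw [norm_mul, Complex.norm_real, Real.norm_eq_abs, abs_of_nonneg (h₁.2 y x).1, mul_assoc]
        _ ≤ ∫ y, (h y).re * Γ₂ y x ∂μ := by
            refine integral_mono_ae (hmulint h₁ (hfi.const_mul _) x) (hmulint h₂ hhi x) ?_
            filter_upwards [ih, hlx] with y hy hy2
            exact mul_le_mul hy.1 hy2 (h₁.2 y x).1 (le_trans (by positivity) hy.1)
  have hgn : ‖hg.toLp _‖ ≠ 0 := by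
    rw [norm_ne_zero_iff]
    intro h0
    rw [Lp.eq_zero_iff_ae_eq_zero] at h0
    apply hf0
    filter_upwards [h0, hg.coeFn_toLp] with x h1 h2
    rw [h1] at h2
    simpa using h2.symm
  have hgpos : 0 < ‖hg.toLp _‖ := lt_of_le_of_ne (norm_nonneg _) hgn.symm
  refine le_of_mul_le_mul_right ?_ hgpos
  refine le_trans ?_ ((T ^ n).le_opNorm _)
  have e : ‖τ‖ ^ n * ‖hg.toLp _‖ = ‖((‖τ‖ ^ n : ℝ) : ℂ) • hg.toLp _‖ := by
    rw [norm_smul, Complex.norm_real, Real.norm_of_nonneg (by positivity)]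
  rw [e]
  refine Lp.norm_le_norm_of_ae_le ?_
  filter_upwards [key n, Lp.coeFn_smul ((‖τ‖ ^ n : ℝ) : ℂ) (hg.toLp _), hg.coeFn_toLp] with x h1 h2 h3
  rw [h2, Pi.smul_apply, h3, norm_smul, Complex.norm_real, Complex.norm_real,
    Real.norm_of_nonneg (by positivity), norm_norm]
  exact h1.1.trans (Complex.re_le_norm _)

lemma memLp_ker {μ : Measure Ω} [IsProbabilityMeasure μ] {Γ : Ω → Ω → ℝ} (h : IsDigraphon Γ) :
    MemLp (fun p : Ω × Ω => (Γ p.2 p.1 : ℂ)) 2 (μ.prod μ) := by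
  refine MemLp.of_bound (C := 1) ?_ (.of_forall fun p => ?_)
  · exact (Complex.measurable_ofReal.comp (h.1.comp measurable_swap)).aestronglyMeasurable
  · rw [Complex.norm_real, Real.norm_of_nonneg (h.2 _ _).1]
    exact (h.2 _ _).2

lemma exists_eigenvalue_ge {μ : Measure Ω} [IsProbabilityMeasure μ]
    {Γ : Ω → Ω → ℝ}
    {T : Lp ℂ 2 μ →L[ℂ] Lp ℂ 2 μ} (hT : IsKerOp μ (fun p => (Γ p.2 p.1 : ℂ)) T)
    (hc : IsCompactOperator T) {c : ℝ} (hc0 : 0 < c) (hpow : ∀ n : ℕ, c ^ n ≤ ‖T ^ n‖) :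
    ∃ l : ℂ, IsEigenvalue μ Γ l ∧ c ≤ ‖l‖ := by
  have hT0 : T ≠ 0 := by
    rintro rfl
    have := hpow 1
    simp at this
    linarith
  have : Nontrivial (Lp ℂ 2 μ →L[ℂ] Lp ℂ 2 μ) := ⟨T, 0, hT0⟩
  obtain ⟨l, hl, hl2⟩ := spectrum.exists_nnnorm_eq_spectralRadius T
  have hge : ENNReal.ofReal c ≤ spectralRadius ℂ T := by
    refine ge_of_tendsto (spectrum.pow_norm_pow_one_div_tendsto_nhds_spectralRadius T) ?_
    filter_upwards [eventually_gt_atTop 0] with n hn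
    apply ENNReal.ofReal_le_ofReal
    calc c = (c ^ n) ^ (1 / n : ℝ) := by
          rw [one_div, Real.pow_rpow_inv_natCast hc0.le hn.ne']
      _ ≤ _ := by
          gcongr
          exact hpow n
  have hcl : c ≤ ‖l‖ := by
    rw [← hl2] at hge
    have := ENNReal.toReal_mono (by simp) hge
    simpa [ENNReal.toReal_ofReal hc0.le] using this
  have hl0 : l ≠ 0 := by
    rintro rfl
    simp at hcl
    linarith
  obtain ⟨v, hv⟩ := ((hc.hasEigenvalue_iff_mem_spectrum hl0).2 hl).exists_hasEigenvector
  refine ⟨l, ⟨v, Lp.memLp v, fun h => hv.2 ((Lp.eq_zero_iff_ae_eq_zero).2 h), ?_⟩, hcl⟩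
  have hTv : T v = l • v := hv.apply_eq_smul
  filter_upwards [hT v, Lp.coeFn_smul l v] with x h1 h2
  rw [← h1, hTv, h2]
  rfl

end aux

/-- Monotonicity of the spectral radius: if `Γ₁ ≤ Γ₂` almost everywhere,
then `ρ(Γ₁) ≤ ρ(Γ₂)`. -/
theorem specRad_monotone
    {Ω : Type*} [MeasurableSpace Ω] (μ : Measure Ω) [IsProbabilityMeasure μ]
    (Γ₁ Γ₂ : Ω → Ω → ℝ) (h₁ : IsDigraphon Γ₁) (h₂ : IsDigraphon Γ₂)
    (hle : ∀ᵐ p : Ω × Ω ∂(μ.prod μ), Γ₁ p.1 p.2 ≤ Γ₂ p.1 p.2) :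
    specRad μ Γ₁ ≤ specRad μ Γ₂ := by
  obtain ⟨T, hT, hc⟩ := KC.of_memLp μ (memLp_ker (μ := μ) h₂)
  have hbdd : BddAbove (insert 0 {r : ℝ | ∃ τ : ℂ, IsEigenvalue μ Γ₂ τ ∧ ‖τ‖ = r}) := by
    refine ⟨‖T‖, ?_⟩
    rintro r (rfl | ⟨τ, hτ, rfl⟩)
    · exact norm_nonneg _
    · simpa using pow_le_norm_pow h₂ h₂ (.of_forall fun _ => le_rfl) hT hτ 1
  refine csSup_le (insert_nonempty _ _) ?_
  rintro r (rfl | ⟨τ, hτ, rfl⟩)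
  · exact le_csSup hbdd (mem_insert _ _)
  · rcases (norm_nonneg τ).eq_or_lt with h0 | h0
    · rw [← h0]; exact le_csSup hbdd (mem_insert _ _)
    · obtain ⟨l, hl, hcl⟩ := exists_eigenvalue_ge hT hc h0 (pow_le_norm_pow h₁ h₂ hle hT hτ)
      exact hcl.trans (le_csSup hbdd (mem_insert_of_mem _ ⟨l, hl, rfl⟩))

end Digraphon
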